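/- arXiv:2207.04052 — 7 statements merged into one kernel-verified Lean document; each statement's English description precedes it below -/
import Mathlib

section
/- The point (π*, κ*, θ₁*, θ₂*) with π* = ι/(2σ) + ρ(λ−a+ρbι)/(2(1−ρ²)σb), κ* = (λ−a+ρbι)/(2(1−ρ²)b²), θ₁* = −ι/2, θ₂* = (λ−a+ρbι)/(2√(1−ρ²)·b) is a saddle point of F, i.e. F(π, κ, θ₁*, θ₂*) ≤ F(π*, κ*, θ₁*, θ₂*) ≤ F(π*, κ*, θ₁, θ₂) for all real π, κ, θ₁, θ₂. Consequently sup over (π,κ) of inf over (θ₁,θ₂) of F equals inf over (θ₁,θ₂) of sup over (π,κ) of F, both being attained at (π*, κ*, θ₁*, θ₂*), with common value F(π*, κ*, θ₁*, θ₂*) = (1/4)·[ι² + (λ−a+ρbι)²/((1−ρ²)b²)]. -/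
/-!
The objective depends on `(π, κ)` only through the exposure
`x = (σπ - ρbκ, -√(1-ρ²)bκ)` of the insurer's wealth to the two driving Brownian motions. In terms
of `x` and the market price of risk `m = (ι, -(λ-a+ρbι)/(√(1-ρ²)b))` it reads
`⟪m, x⟫ - ‖x‖²/2 + ⟪x, θ⟫ + ‖θ‖²/2`. Completing the square in `θ` and in `x` shows that
`(θ, x) = (-m/2, m/2)` is a saddle point with value `‖m‖²/4`. The same two squares give the
one-sided bounds that keep the inner real-valued infima and suprema away from the junk value `0`,
so that the saddle value is both the lower and the upper value of the game.
-/

open Set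

section Minimax

variable {X X' Y Y' α : Type*} [ConditionallyCompleteLattice α]

theorem isLeast_range_ciSup_of_isSaddlePointOn {f : X → Y → α} {x₀ : X} {y₀ : Y}
    (h : IsSaddlePointOn univ univ f x₀ y₀) (hbdd : ∀ x, BddAbove (range (f x))) :
    IsLeast (range fun x ↦ ⨆ y, f x y) (f x₀ y₀) := by
  have : Nonempty Y := ⟨y₀⟩
  constructor
  · exact ⟨x₀, le_antisymm
      (ciSup_le fun y ↦ h x₀ (mem_univ _) y (mem_univ _))
      (le_ciSup (hbdd x₀) y₀)⟩
  · rintro _ ⟨x, rfl⟩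
    exact (h x (mem_univ _) y₀ (mem_univ _)).trans (le_ciSup (hbdd x) y₀)

theorem ciInf_prod_ciSup_prod_eq_of_isSaddlePointOn {f : X × X' → Y × Y' → α}
    {x₀ : X × X'} {y₀ : Y × Y'} (h : IsSaddlePointOn univ univ f x₀ y₀)
    (hbdd : ∀ x, BddAbove (range (f x))) :
    ⨅ x, ⨅ x', ⨆ y, ⨆ y', f (x, x') (y, y') = f x₀ y₀ := by
  have hleast := isLeast_range_ciSup_of_isSaddlePointOn h hbdd
  calc ⨅ x, ⨅ x', ⨆ y, ⨆ y', f (x, x') (y, y')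
      = ⨅ x, ⨅ x', ⨆ y, f (x, x') y := by simp only [ciSup_prod (hbdd _)]
    _ = ⨅ x, ⨆ y, f x y := (ciInf_prod hleast.bddBelow).symm
    _ = f x₀ y₀ := hleast.csInf_eq

theorem ciSup_prod_ciInf_prod_eq_of_isSaddlePointOn {f : X × X' → Y × Y' → α}
    {x₀ : X × X'} {y₀ : Y × Y'} (h : IsSaddlePointOn univ univ f x₀ y₀)
    (hbdd : ∀ y, BddBelow (range fun x ↦ f x y)) :
    ⨆ y, ⨆ y', ⨅ x, ⨅ x', f (x, x') (y, y') = f x₀ y₀ :=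
  ciInf_prod_ciSup_prod_eq_of_isSaddlePointOn (α := αᵒᵈ) (f := fun y x ↦ f x y)
    (fun y _ x _ ↦ h x (mem_univ _) y (mem_univ _)) hbdd

end Minimax

section PenalizedGrowth

open scoped RealInnerProductSpace

variable {E : Type*} [NormedAddCommGroup E] [InnerProductSpace ℝ E]

/-- The expected logarithmic growth rate of a wealth with exposure `x` to the risk factors, when
`m` is the market price of risk and the measure is changed with density `θ`, plus the quadratic
entropy penalty of that change. The minimizing variable `θ` comes first, as in
`IsSaddlePointOn`. -/
noncomputable def penalizedGrowth (m θ x : E) : ℝ :=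
  ⟪m, x⟫ - ‖x‖ ^ 2 / 2 + ⟪x, θ⟫ + ‖θ‖ ^ 2 / 2

theorem penalizedGrowth_eq_add_norm_sq (m θ x : E) :
    penalizedGrowth m θ x = ⟪m, x⟫ - ‖x‖ ^ 2 + ‖x + θ‖ ^ 2 / 2 := by
  rw [penalizedGrowth, norm_add_sq_real]
  ring

theorem penalizedGrowth_eq_sub_norm_sq (m θ x : E) :
    penalizedGrowth m θ x = (‖m + θ‖ ^ 2 + ‖θ‖ ^ 2) / 2 - ‖x - (m + θ)‖ ^ 2 / 2 := by
  rw [penalizedGrowth, norm_sub_sq_real, inner_add_right, real_inner_comm]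
  ring

theorem bddBelow_range_penalizedGrowth_left {I : Type*} (m : E) (θ : I → E) (x : E) :
    BddBelow (range fun i ↦ penalizedGrowth m (θ i) x) := by
  refine ⟨⟪m, x⟫ - ‖x‖ ^ 2, ?_⟩
  rintro _ ⟨i, rfl⟩
  simp only [penalizedGrowth_eq_add_norm_sq]
  exact le_add_of_nonneg_right (by positivity)

theorem bddAbove_range_penalizedGrowth_right {I : Type*} (m θ : E) (x : I → E) :
    BddAbove (range fun i ↦ penalizedGrowth m θ (x i)) := by
  refine ⟨(‖m + θ‖ ^ 2 + ‖θ‖ ^ 2) / 2, ?_⟩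
  rintro _ ⟨i, rfl⟩
  simp only [penalizedGrowth_eq_sub_norm_sq]
  exact sub_le_self _ (by positivity)

theorem penalizedGrowth_neg_half (m x : E) :
    penalizedGrowth m (-((2⁻¹ : ℝ) • m)) x
      = ‖m‖ ^ 2 / 4 - ‖x - (2⁻¹ : ℝ) • m‖ ^ 2 / 2 := by
  have half : m + -((2⁻¹ : ℝ) • m) = (2⁻¹ : ℝ) • m := by module
  rw [penalizedGrowth_eq_sub_norm_sq, half, norm_neg, norm_smul, norm_inv,
    Real.norm_ofNat]
  ring

theorem penalizedGrowth_half (m θ : E) :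
    penalizedGrowth m θ ((2⁻¹ : ℝ) • m) = ‖m‖ ^ 2 / 4 + ‖(2⁻¹ : ℝ) • m + θ‖ ^ 2 / 2 := by
  rw [penalizedGrowth_eq_add_norm_sq, real_inner_smul_right, real_inner_self_eq_norm_sq,
    norm_smul, norm_inv, Real.norm_ofNat]
  ring

theorem penalizedGrowth_neg_half_half (m : E) :
    penalizedGrowth m (-((2⁻¹ : ℝ) • m)) ((2⁻¹ : ℝ) • m) = ‖m‖ ^ 2 / 4 := by
  simp [penalizedGrowth_neg_half]

theorem isSaddlePointOn_penalizedGrowth (m : E) :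
    IsSaddlePointOn univ univ (penalizedGrowth m) (-((2⁻¹ : ℝ) • m)) ((2⁻¹ : ℝ) • m) := by
  intro θ _ x _
  calc penalizedGrowth m (-((2⁻¹ : ℝ) • m)) x
      ≤ ‖m‖ ^ 2 / 4 := by
        rw [penalizedGrowth_neg_half]
        exact sub_le_self _ (by positivity)
    _ ≤ penalizedGrowth m θ ((2⁻¹ : ℝ) • m) := by
        rw [penalizedGrowth_half]
        exact le_add_of_nonneg_right (by positivity)

end PenalizedGrowth

section Insurer

/-- The diffusion coefficient of the insurer's wealth with respect to the two independent Brownian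
motions, for the investment proportion `π` and the liability ratio `κ`. -/
noncomputable def riskExposure (σ b ρ π κ : ℝ) : EuclideanSpace ℝ (Fin 2) :=
  !₂[σ * π - ρ * b * κ, -(√(1 - ρ ^ 2) * b * κ)]

/-- The market price of risk of the two independent Brownian motions, where `ι` is the Sharpe ratio
of the risky asset and `η` (in the paper `λ - a`) is the excess premium rate of the liability. The
second component is a junk value unless `b ≠ 0` and `ρ ^ 2 < 1`. -/
noncomputable def marketPriceOfRisk (b ρ ι η : ℝ) : EuclideanSpace ℝ (Fin 2) :=
  !₂[ι, -((η + ρ * b * ι) / (√(1 - ρ ^ 2) * b))]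

variable {σ b ρ : ℝ}

theorem norm_sq_marketPriceOfRisk (hρ : ρ ^ 2 ≤ 1) (ι η : ℝ) :
    ‖marketPriceOfRisk b ρ ι η‖ ^ 2
      = ι ^ 2 + (η + ρ * b * ι) ^ 2 / ((1 - ρ ^ 2) * b ^ 2) := by
  simp [marketPriceOfRisk, EuclideanSpace.real_norm_sq_eq, div_pow, mul_pow,
    Real.sq_sqrt (sub_nonneg.2 hρ)]

theorem penalizedGrowth_marketPriceOfRisk_riskExposure (hb : b ≠ 0) (hρ : ρ ^ 2 < 1)
    (ι η π κ θ₁ θ₂ : ℝ) :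
    penalizedGrowth (marketPriceOfRisk b ρ ι η) !₂[θ₁, θ₂] (riskExposure σ b ρ π κ)
      = ι * σ * π + η * κ
        - (1 / 2) * ((σ * π - ρ * b * κ) ^ 2 + (1 - ρ ^ 2) * b ^ 2 * κ ^ 2)
        + (σ * π - ρ * b * κ) * θ₁ - √(1 - ρ ^ 2) * b * κ * θ₂
        + (1 / 2) * (θ₁ ^ 2 + θ₂ ^ 2) := by
  have hsqrt : √(1 - ρ ^ 2) ≠ 0 := (Real.sqrt_pos.2 (sub_pos.2 hρ)).ne'
  have drift : (η + ρ * b * ι) / (√(1 - ρ ^ 2) * b) * (√(1 - ρ ^ 2) * b * κ)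
      = (η + ρ * b * ι) * κ := by field_simp
  simp only [penalizedGrowth, marketPriceOfRisk, riskExposure, EuclideanSpace.real_norm_sq_eq,
    PiLp.inner_apply, Fin.sum_univ_two, Matrix.cons_val_zero, Matrix.cons_val_one,
    RCLike.inner_apply, conj_trivial, neg_sq, mul_pow, Real.sq_sqrt (sub_pos.2 hρ).le]
  linear_combination drift

theorem riskExposure_eq_half_smul_marketPriceOfRisk (hσ : σ ≠ 0) (hb : b ≠ 0) (hρ : ρ ^ 2 < 1)
    (ι η : ℝ) :
    riskExposure σ b ρ
        (ι / (2 * σ) + ρ * (η + ρ * b * ι) / (2 * (1 - ρ ^ 2) * σ * b))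
        ((η + ρ * b * ι) / (2 * (1 - ρ ^ 2) * b ^ 2))
      = (2⁻¹ : ℝ) • marketPriceOfRisk b ρ ι η := by
  have hpos : 0 < 1 - ρ ^ 2 := sub_pos.2 hρ
  have hsqrt : √(1 - ρ ^ 2) ≠ 0 := (Real.sqrt_pos.2 hpos).ne'
  have hsq : √(1 - ρ ^ 2) ^ 2 = 1 - ρ ^ 2 := Real.sq_sqrt hpos.le
  have fst_eq : σ * (ι / (2 * σ) + ρ * (η + ρ * b * ι) / (2 * (1 - ρ ^ 2) * σ * b))
      - ρ * b * ((η + ρ * b * ι) / (2 * (1 - ρ ^ 2) * b ^ 2)) = 2⁻¹ * ι := by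
    field_simp [hpos.ne']
    ring
  have snd_eq : √(1 - ρ ^ 2) * b * ((η + ρ * b * ι) / (2 * (1 - ρ ^ 2) * b ^ 2))
      = 2⁻¹ * ((η + ρ * b * ι) / (√(1 - ρ ^ 2) * b)) := by
    field_simp [hpos.ne']
    rw [hsq]
  rw [riskExposure, fst_eq, snd_eq]
  ext i
  fin_cases i <;> simp [marketPriceOfRisk]

theorem neg_half_smul_marketPriceOfRisk (b ρ ι η : ℝ) :
    -((2⁻¹ : ℝ) • marketPriceOfRisk b ρ ι η)
      = !₂[-ι / 2, (η + ρ * b * ι) / (2 * √(1 - ρ ^ 2) * b)] := by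
  refine PiLp.ext (Fin.forall_fin_two.2 ⟨?_, ?_⟩)
  · change -(2⁻¹ * ι) = -ι / 2
    ring
  · change -(2⁻¹ * -((η + ρ * b * ι) / (√(1 - ρ ^ 2) * b)))
      = (η + ρ * b * ι) / (2 * √(1 - ρ ^ 2) * b)
    ring

end Insurer

/-- **Saddle point of the robust objective (small insurer, continuous case).**
With `ι = (μ₀ − r)/σ`, the point
`π* = ι/(2σ) + ρ(λ−a+ρbι)/(2(1−ρ²)σb)`, `κ* = (λ−a+ρbι)/(2(1−ρ²)b²)`,
`θ₁* = −ι/2`, `θ₂* = (λ−a+ρbι)/(2√(1−ρ²)b)` is a saddle point of `F`;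
consequently `sup_{π,κ} inf_{θ₁,θ₂} F = inf_{θ₁,θ₂} sup_{π,κ} F`, both attained there,
with common value `(1/4)[ι² + (λ−a+ρbι)²/((1−ρ²)b²)]`. -/
theorem robust_saddle_point
    (μ₀ r lam a σ b ρ : ℝ)
    (hσ : 0 < σ) (hb : 0 < b) (hρ₁ : -1 < ρ) (hρ₂ : ρ < 1)
    (ι : ℝ) (hι : ι = (μ₀ - r) / σ)
    (F : ℝ → ℝ → ℝ → ℝ → ℝ)
    (hF : ∀ π κ θ₁ θ₂ : ℝ, F π κ θ₁ θ₂ =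
      (μ₀ - r) * π + (lam - a) * κ
        - (1/2) * ((σ*π - ρ*b*κ)^2 + (1 - ρ^2) * b^2 * κ^2)
        + (σ*π - ρ*b*κ) * θ₁ - Real.sqrt (1 - ρ^2) * b * κ * θ₂
        + (1/2) * (θ₁^2 + θ₂^2))
    (πs κs θ₁s θ₂s : ℝ)
    (hπs : πs = ι / (2*σ) + ρ * (lam - a + ρ*b*ι) / (2 * (1 - ρ^2) * σ * b))
    (hκs : κs = (lam - a + ρ*b*ι) / (2 * (1 - ρ^2) * b^2))
    (hθ₁s : θ₁s = -ι / 2)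
    (hθ₂s : θ₂s = (lam - a + ρ*b*ι) / (2 * Real.sqrt (1 - ρ^2) * b)) :
    (∀ π κ : ℝ, F π κ θ₁s θ₂s ≤ F πs κs θ₁s θ₂s) ∧
    (∀ θ₁ θ₂ : ℝ, F πs κs θ₁s θ₂s ≤ F πs κs θ₁ θ₂) ∧
    (⨆ π : ℝ, ⨆ κ : ℝ, ⨅ θ₁ : ℝ, ⨅ θ₂ : ℝ, F π κ θ₁ θ₂) = F πs κs θ₁s θ₂s ∧
    (⨅ θ₁ : ℝ, ⨅ θ₂ : ℝ, ⨆ π : ℝ, ⨆ κ : ℝ, F π κ θ₁ θ₂) = F πs κs θ₁s θ₂s ∧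
    F πs κs θ₁s θ₂s = (1/4) * (ι^2 + (lam - a + ρ*b*ι)^2 / ((1 - ρ^2) * b^2)) := by
  have hρ : ρ ^ 2 < 1 := (sq_lt_one_iff_abs_lt_one ρ).2 (abs_lt.2 ⟨hρ₁, hρ₂⟩)
  let m := marketPriceOfRisk b ρ ι (lam - a)
  have hFm (π κ θ₁ θ₂ : ℝ) :
      F π κ θ₁ θ₂ = penalizedGrowth m !₂[θ₁, θ₂] (riskExposure σ b ρ π κ) := by
    rw [hF, penalizedGrowth_marketPriceOfRisk_riskExposure hb.ne' hρ, hι, div_mul_cancel₀ _ hσ.ne']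
  have hx : riskExposure σ b ρ πs κs = (2⁻¹ : ℝ) • m := by
    rw [hπs, hκs, riskExposure_eq_half_smul_marketPriceOfRisk hσ.ne' hb.ne' hρ]
  have hθ : !₂[θ₁s, θ₂s] = -((2⁻¹ : ℝ) • m) := by
    rw [hθ₁s, hθ₂s, neg_half_smul_marketPriceOfRisk]
  have hsaddle : IsSaddlePointOn univ univ (fun θ p : ℝ × ℝ ↦ F p.1 p.2 θ.1 θ.2)
      (θ₁s, θ₂s) (πs, κs) := fun θ _ p _ ↦ by
    simpa only [hFm, hx, hθ] using
      isSaddlePointOn_penalizedGrowth m !₂[θ.1, θ.2] (mem_univ _) _ (mem_univ _)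
  have hbelow (p : ℝ × ℝ) : BddBelow (range fun θ : ℝ × ℝ ↦ F p.1 p.2 θ.1 θ.2) := by
    simpa only [hFm] using bddBelow_range_penalizedGrowth_left m (fun θ : ℝ × ℝ ↦ !₂[θ.1, θ.2]) _
  have habove (θ : ℝ × ℝ) : BddAbove (range fun p : ℝ × ℝ ↦ F p.1 p.2 θ.1 θ.2) := by
    simpa only [hFm] using bddAbove_range_penalizedGrowth_right m _ fun p : ℝ × ℝ ↦
      riskExposure σ b ρ p.1 p.2
  have hlower := ciSup_prod_ciInf_prod_eq_of_isSaddlePointOn hsaddle hbelow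
  have hupper := ciInf_prod_ciSup_prod_eq_of_isSaddlePointOn hsaddle habove
  refine ⟨fun π κ ↦ hsaddle (θ₁s, θ₂s) (mem_univ _) (π, κ) (mem_univ _),
    fun θ₁ θ₂ ↦ hsaddle (θ₁, θ₂) (mem_univ _) (πs, κs) (mem_univ _), hlower, hupper, ?_⟩
  rw [hFm, hx, hθ, penalizedGrowth_neg_half_half, norm_sq_marketPriceOfRisk hρ.le]
  ring
end

section
/- The function G is strictly concave on ℝ² and attains its unique global maximum at π* = ι/σ + ρ(λ−a+ρbι)/((1−ρ²)σb), κ* = (λ−a+ρbι)/((1−ρ²)b²), with maximum value G(π*, κ*) = (1/2)·[ι² + (λ−a+ρbι)²/((1−ρ²)b²)]. -/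
/-!
The objective is a linear functional `ℓ` minus a positive definite quadratic form `Q`, so it is
strictly concave. If `v` solves the first-order condition `polar Q v = ℓ`, completing the square
gives `ℓ x - Q x = Q v - Q (x - v)`, so `v` is the unique maximizer and `Q v` is the maximum.
-/

open QuadraticMap

section LinearSubQuadratic

variable {R M N : Type*} [CommRing R] [AddCommGroup M] [Module R M] [AddCommGroup N] [Module R N]
  {Q : QuadraticMap R M N} {ℓ : M →ₗ[R] N} {v x : M}

theorem quadraticMap_sub_eq (Q : QuadraticMap R M N) (x y : M) :
    Q (x - y) = Q x + Q y - polar Q x y := by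
  rw [sub_eq_add_neg, QuadraticMap.map_add Q, QuadraticMap.map_neg, polar_neg_right,
    ← sub_eq_add_neg]

theorem quadraticMap_convex_combination (Q : QuadraticMap R M N) (x y : M) {s t : R}
    (hst : s + t = 1) :
    Q (s • x + t • y) = s • Q x + t • Q y - (s * t) • Q (x - y) := by
  obtain rfl : t = 1 - s := eq_sub_of_add_eq' hst
  rw [quadraticMap_sub_eq, QuadraticMap.map_add Q, QuadraticMap.map_smul, QuadraticMap.map_smul,
    polar_smul_left, polar_smul_right]
  module

theorem linear_sub_quadratic_eq_of_polar_eq (hv : ∀ y, polar Q v y = ℓ y) (x : M) :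
    ℓ x - Q x = Q v - Q (x - v) := by
  rw [quadraticMap_sub_eq, polar_comm, hv]
  abel

theorem linear_sub_quadratic_apply_of_polar_eq (hv : ∀ y, polar Q v y = ℓ y) :
    ℓ v - Q v = Q v := by
  rw [linear_sub_quadratic_eq_of_polar_eq hv, sub_self, QuadraticMap.map_zero, sub_zero]

variable [PartialOrder N] [IsOrderedAddMonoid N]

theorem linear_sub_quadratic_lt_of_polar_eq (hQ : Q.PosDef) (hv : ∀ y, polar Q v y = ℓ y)
    (hx : x ≠ v) : ℓ x - Q x < ℓ v - Q v := by
  rw [linear_sub_quadratic_eq_of_polar_eq hv x, linear_sub_quadratic_apply_of_polar_eq hv]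
  exact sub_lt_self _ (hQ _ (sub_ne_zero.2 hx))

variable [PartialOrder R] [IsStrictOrderedRing R] [PosSMulStrictMono R N]

theorem strictConvexOn_of_posDef (hQ : Q.PosDef) : StrictConvexOn R Set.univ Q := by
  refine ⟨convex_univ, fun x _ y _ hxy s t hs ht hst => ?_⟩
  rw [quadraticMap_convex_combination Q x y hst]
  exact sub_lt_self _ (smul_pos (mul_pos hs ht) (hQ _ (sub_ne_zero.2 hxy)))

theorem strictConcaveOn_linear_sub_quadratic (ℓ : M →ₗ[R] N) (hQ : Q.PosDef) :
    StrictConcaveOn R Set.univ (fun x => ℓ x - Q x) :=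
  (ℓ.concaveOn convex_univ).sub_strictConvexOn (strictConvexOn_of_posDef hQ)

end LinearSubQuadratic

section HalfVariance

variable {𝕜 : Type*} [Field 𝕜]

/-- The quadratic form `((s x - β y)² + c y²) / 2` in the coordinates `(x, y)`. With `s = σ`,
`β = ρ b` and `c = (1 - ρ²) b²` it is half the variance rate of the insurer's log-wealth, written
as a sum over its two independent noise sources. -/
def halfVariance (s β c : 𝕜) : QuadraticForm 𝕜 (𝕜 × 𝕜) :=
  (1 / 2 : 𝕜) • (sq.comp (s • LinearMap.fst 𝕜 𝕜 𝕜 - β • LinearMap.snd 𝕜 𝕜 𝕜)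
    + c • sq.comp (LinearMap.snd 𝕜 𝕜 𝕜))

theorem halfVariance_apply (s β c : 𝕜) (p : 𝕜 × 𝕜) :
    halfVariance s β c p = 1 / 2 * ((s * p.1 - β * p.2) ^ 2 + c * p.2 ^ 2) := by
  simp [halfVariance, pow_two, mul_add]

theorem polar_halfVariance [NeZero (2 : 𝕜)] (s β c : 𝕜) (p q : 𝕜 × 𝕜) :
    polar (halfVariance s β c) p q =
      s * (s * p.1 - β * p.2) * q.1 + (c * p.2 - β * (s * p.1 - β * p.2)) * q.2 := by
  simp only [polar, halfVariance_apply, Prod.fst_add, Prod.snd_add]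
  field_simp
  ring

theorem posDef_halfVariance [LinearOrder 𝕜] [IsStrictOrderedRing 𝕜] {s c : 𝕜} (hs : s ≠ 0)
    (β : 𝕜) (hc : 0 < c) : (halfVariance s β c).PosDef := by
  rintro ⟨x, y⟩ hxy
  rw [halfVariance_apply]
  refine mul_pos one_half_pos ?_
  rcases eq_or_ne y 0 with rfl | hy
  · have hx : x ≠ 0 := fun hx => hxy (by rw [hx, Prod.mk_zero_zero])
    simpa using sq_pos_of_ne_zero (mul_ne_zero hs hx)
  · exact add_pos_of_nonneg_of_pos (sq_nonneg _) (mul_pos hc (sq_pos_of_ne_zero hy))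

end HalfVariance

/-- **The non-robust objective is strictly concave with a unique global maximum.**
With `ι = (μ₀ − r)/σ`, the function
`G(π,κ) = (μ₀−r)π + (λ−a)κ − (1/2)[(σπ−ρbκ)² + (1−ρ²)b²κ²]`
is strictly concave on `ℝ²` and attains its unique global maximum at
`π* = ι/σ + ρ(λ−a+ρbι)/((1−ρ²)σb)`, `κ* = (λ−a+ρbι)/((1−ρ²)b²)`,
with maximum value `(1/2)[ι² + (λ−a+ρbι)²/((1−ρ²)b²)]`. -/
theorem nonrobust_objective_strict_concave_unique_max
    (μ₀ r lam a σ b ρ : ℝ)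
    (hσ : 0 < σ) (hb : 0 < b) (hρ₁ : -1 < ρ) (hρ₂ : ρ < 1)
    (ι : ℝ) (hι : ι = (μ₀ - r) / σ)
    (G : ℝ → ℝ → ℝ)
    (hG : ∀ π κ : ℝ, G π κ =
      (μ₀ - r) * π + (lam - a) * κ
        - (1/2) * ((σ*π - ρ*b*κ)^2 + (1 - ρ^2) * b^2 * κ^2))
    (πs κs : ℝ)
    (hπs : πs = ι / σ + ρ * (lam - a + ρ*b*ι) / ((1 - ρ^2) * σ * b))
    (hκs : κs = (lam - a + ρ*b*ι) / ((1 - ρ^2) * b^2)) :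
    StrictConcaveOn ℝ Set.univ (fun p : ℝ × ℝ => G p.1 p.2) ∧
    (∀ π κ : ℝ, (π, κ) ≠ (πs, κs) → G π κ < G πs κs) ∧
    G πs κs = (1/2) * (ι^2 + (lam - a + ρ*b*ι)^2 / ((1 - ρ^2) * b^2)) := by
  have hρ : 0 < 1 - ρ ^ 2 := sub_pos.2 ((sq_lt_one_iff_abs_lt_one ρ).2 (abs_lt.2 ⟨hρ₁, hρ₂⟩))
  have hc : 0 < (1 - ρ ^ 2) * b ^ 2 := mul_pos hρ (pow_pos hb 2)
  have hμ : σ * ι = μ₀ - r := by rw [hι, mul_div_cancel₀ _ hσ.ne']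
  have hκ : (1 - ρ ^ 2) * b ^ 2 * κs = lam - a + ρ * b * ι := by
    rw [hκs, mul_div_cancel₀ _ hc.ne']
  have hπ : σ * πs - ρ * b * κs = ι := by
    rw [hπs, hκs]
    field_simp
    ring
  let ℓ : ℝ × ℝ →ₗ[ℝ] ℝ := (μ₀ - r) • LinearMap.fst ℝ ℝ ℝ + (lam - a) • LinearMap.snd ℝ ℝ ℝ
  let Q := halfVariance σ (ρ * b) ((1 - ρ ^ 2) * b ^ 2)
  have hQ : Q.PosDef := posDef_halfVariance hσ.ne' _ hc
  have hGQ (p : ℝ × ℝ) : G p.1 p.2 = ℓ p - Q p := by simp [hG, ℓ, Q, halfVariance_apply]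
  have first_order (p : ℝ × ℝ) : polar Q (πs, κs) p = ℓ p := by
    simp [Q, ℓ, polar_halfVariance, hπ, hκ, hμ]
  refine ⟨?_, fun π κ hne => ?_, ?_⟩
  · simpa only [hGQ] using strictConcaveOn_linear_sub_quadratic ℓ hQ
  · simpa only [← hGQ] using linear_sub_quadratic_lt_of_polar_eq hQ first_order hne
  · rw [hGQ (πs, κs), linear_sub_quadratic_apply_of_polar_eq first_order, halfVariance_apply, hπ,
      ← hκ]
    field_simp
end

section
/- The function G̃ is strictly concave on ℝ² and attains its unique global maximum at π* = [(1−ρ²)φ̃₁ + ρ√(1−ρ²)·φ̃₂]/(σ̃ − ρ²σ), κ* = [√(1−ρ²)·φ̃₂ + ρ(σ/σ̃ − 1)φ̃₁]/((1 − ρ²σ/σ̃)·b), and the maximum value equals (1/2)·(1/(1 − ρ²σ/σ̃))·[((1−2ρ²)σ/σ̃ + ρ²)·φ̃₁² + 2ρ√(1−ρ²)·(σ/σ̃ − 1)·φ̃₁φ̃₂ + (1−ρ²)·φ̃₂²]. -/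
/-!
Since `2ϱ = σ² − σσ̃`, the objective is a linear form `ℓ` minus a quadratic form `Q` on `ℝ²` with
discriminant `−b²σ(σ̃ − ρ²σ) < 0`; hence `Q` is positive definite and `ℓ − Q` is strictly concave.
At the point `x₀` where the first-order condition `polar Q x₀ = ℓ` holds, completing the square
gives `ℓ x − Q x = Q x₀ − Q (x − x₀)`, so `x₀` is the unique maximiser, and the maximum is
`Q x₀ = ℓ x₀ / 2`.
-/

open QuadraticMap

section LinearSubQuadratic

variable {R E : Type*} [CommRing R] [AddCommGroup E] [Module R E]

theorem quadraticForm_map_sub_eq (Q : QuadraticForm R E) (x y : E) :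
    Q (x - y) = Q x + Q y - polar Q x y := by
  rw [sub_eq_add_neg, QuadraticMap.map_add Q, QuadraticMap.map_neg, polar_neg_right,
    ← sub_eq_add_neg]

theorem quadraticForm_map_convexCombo (Q : QuadraticForm R E) (x y : E) {s t : R}
    (hst : s + t = 1) :
    Q (s • x + t • y) = s * Q x + t * Q y - s * t * Q (x - y) := by
  obtain rfl : t = 1 - s := eq_sub_of_add_eq' hst
  simp only [QuadraticMap.map_add, QuadraticMap.map_smul, polar_smul_left, polar_smul_right,
    quadraticForm_map_sub_eq, smul_eq_mul]
  ring

theorem linear_sub_quadraticForm_eq_of_polarBilin_eq {Q : QuadraticForm R E} {ℓ : E →ₗ[R] R}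
    {x₀ : E} (hx₀ : Q.polarBilin x₀ = ℓ) (x : E) :
    ℓ x - Q x = Q x₀ - Q (x - x₀) := by
  rw [quadraticForm_map_sub_eq, polar_comm, ← hx₀, polarBilin_apply_apply]
  ring

theorem two_mul_quadraticForm_eq_of_polarBilin_eq {Q : QuadraticForm R E} {ℓ : E →ₗ[R] R}
    {x₀ : E} (hx₀ : Q.polarBilin x₀ = ℓ) :
    2 * Q x₀ = ℓ x₀ := by
  rw [← hx₀, polarBilin_apply_apply, polar_self, two_nsmul, two_mul]

variable [PartialOrder R] [IsStrictOrderedRing R]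

theorem strictConvexOn_of_quadraticForm_posDef {Q : QuadraticForm R E} (hQ : Q.PosDef) :
    StrictConvexOn R Set.univ Q := by
  refine ⟨convex_univ, fun x _ y _ hxy s t hs ht hst ↦ ?_⟩
  rw [quadraticForm_map_convexCombo Q x y hst, smul_eq_mul, smul_eq_mul]
  exact sub_lt_self _ (mul_pos (mul_pos hs ht) (hQ _ (sub_ne_zero.2 hxy)))

theorem strictConcaveOn_linear_sub_quadraticForm {Q : QuadraticForm R E} (hQ : Q.PosDef)
    (ℓ : E →ₗ[R] R) :
    StrictConcaveOn R Set.univ (fun x ↦ ℓ x - Q x) :=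
  (ℓ.concaveOn convex_univ).sub_strictConvexOn (strictConvexOn_of_quadraticForm_posDef hQ)

theorem linear_sub_quadraticForm_lt_of_polarBilin_eq {Q : QuadraticForm R E} (hQ : Q.PosDef)
    {ℓ : E →ₗ[R] R} {x₀ x : E} (hx₀ : Q.polarBilin x₀ = ℓ) (hx : x ≠ x₀) :
    ℓ x - Q x < ℓ x₀ - Q x₀ := by
  rw [linear_sub_quadraticForm_eq_of_polarBilin_eq hx₀ x,
    linear_sub_quadraticForm_eq_of_polarBilin_eq hx₀ x₀, sub_self, QuadraticMap.map_zero, sub_zero]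
  exact sub_lt_self _ (hQ _ (sub_ne_zero.2 hx))

end LinearSubQuadratic

section Binary

variable {R : Type*} [CommRing R]

/-- The binary linear form `p u + q v`. -/
def binaryLinearForm (p q : R) : R × R →ₗ[R] R :=
  p • LinearMap.fst R R R + q • LinearMap.snd R R R

/-- The binary quadratic form `a u² + b u v + c v²`, in Gauss's normalisation: the mixed coefficient
is `b`, not `2 b`, so that the discriminant is `b² − 4 a c`. -/
def binaryQuadraticForm (a b c : R) : QuadraticForm R (R × R) :=
  a • linMulLin (LinearMap.fst R R R) (LinearMap.fst R R R) +
    b • linMulLin (LinearMap.fst R R R) (LinearMap.snd R R R) +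
    c • linMulLin (LinearMap.snd R R R) (LinearMap.snd R R R)

theorem binaryLinearForm_apply (p q u v : R) : binaryLinearForm p q (u, v) = p * u + q * v :=
  rfl

theorem binaryQuadraticForm_apply (a b c u v : R) :
    binaryQuadraticForm a b c (u, v) = a * u ^ 2 + b * (u * v) + c * v ^ 2 := by
  simp [binaryQuadraticForm, pow_two]

theorem polarBilin_binaryQuadraticForm (a b c u v : R) :
    (binaryQuadraticForm a b c).polarBilin (u, v) =
      binaryLinearForm (2 * a * u + b * v) (b * u + 2 * c * v) := by
  refine LinearMap.ext fun ⟨u', v'⟩ ↦ ?_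
  simp only [polarBilin_apply_apply, polar, Prod.mk_add_mk, binaryQuadraticForm_apply,
    binaryLinearForm_apply]
  ring

theorem binaryQuadraticForm_posDef [LinearOrder R] [IsStrictOrderedRing R] {a b c : R}
    (hc : 0 < c) (hdisc : b ^ 2 < 4 * a * c) : (binaryQuadraticForm a b c).PosDef := by
  rintro ⟨u, v⟩ huv
  rw [binaryQuadraticForm_apply]
  rcases eq_or_ne u 0 with rfl | hu
  · have hv : v ≠ 0 := fun hv ↦ huv (by rw [hv, Prod.mk_zero_zero])
    simpa using mul_pos hc (sq_pos_of_ne_zero hv)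
  · refine pos_of_mul_pos_right (a := 4 * c) ?_ (by positivity)
    calc 0 < (4 * a * c - b ^ 2) * u ^ 2 := mul_pos (sub_pos.2 hdisc) (sq_pos_of_ne_zero hu)
      _ ≤ (2 * c * v + b * u) ^ 2 + (4 * a * c - b ^ 2) * u ^ 2 :=
        le_add_of_nonneg_left (sq_nonneg _)
      _ = 4 * c * (a * u ^ 2 + b * (u * v) + c * v ^ 2) := by ring

end Binary

section LargeInsurer

/-- The linear part of the large insurer's objective, as a form in the investment `π` and the
liability ratio `κ`; `φ₁`, `φ₂` stand for `φ̃₁`, `φ̃₂`. -/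
noncomputable def insurerDrift (σ b ρ φ₁ φ₂ : ℝ) : ℝ × ℝ →ₗ[ℝ] ℝ :=
  binaryLinearForm (σ * φ₁) (√(1 - ρ ^ 2) * b * φ₂ - ρ * b * φ₁)

/-- The quadratic penalty in the large insurer's objective. The price impact `ϱ` enters only
through `σt`, which stands for `σ̃`: `σ * σt = σ ^ 2 - 2 * ϱ`. -/
noncomputable def insurerRisk (σ σt b ρ : ℝ) : QuadraticForm ℝ (ℝ × ℝ) :=
  binaryQuadraticForm (σ * σt / 2) (-(ρ * σ * b)) (b ^ 2 / 2)

/-- The optimal investment `π*`, the first coordinate of the solution of the first-order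
condition. -/
noncomputable def optimalInvestment (σ σt ρ φ₁ φ₂ : ℝ) : ℝ :=
  ((1 - ρ ^ 2) * φ₁ + ρ * √(1 - ρ ^ 2) * φ₂) / (σt - ρ ^ 2 * σ)

/-- The optimal liability ratio `κ*`, the second coordinate of the solution of the first-order
condition. -/
noncomputable def optimalLiability (σ σt b ρ φ₁ φ₂ : ℝ) : ℝ :=
  (√(1 - ρ ^ 2) * φ₂ + ρ * (σ / σt - 1) * φ₁) / ((1 - ρ ^ 2 * σ / σt) * b)

variable {σ σt b ρ ϱ : ℝ}

theorem insurerDrift_sub_insurerRisk (hσ : σ ≠ 0) (hσt : σt = σ - 2 * ϱ / σ) (φ₁ φ₂ π κ : ℝ) :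
    insurerDrift σ b ρ φ₁ φ₂ (π, κ) - insurerRisk σ σt b ρ (π, κ) =
      σ * φ₁ * π + ϱ * π ^ 2 + (√(1 - ρ ^ 2) * b * φ₂ - ρ * b * φ₁) * κ
        - (1 / 2) * (σ * π - ρ * b * κ) ^ 2 - (1 / 2) * (1 - ρ ^ 2) * b ^ 2 * κ ^ 2 := by
  have hσσt : σ * σt = σ ^ 2 - 2 * ϱ := by rw [hσt]; field_simp
  rw [insurerDrift, insurerRisk, binaryLinearForm_apply, binaryQuadraticForm_apply, hσσt]
  ring

theorem insurerRisk_posDef (hσ : 0 < σ) (hb : b ≠ 0) (hσtρ : ρ ^ 2 * σ < σt) :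
    (insurerRisk σ σt b ρ).PosDef := by
  refine binaryQuadraticForm_posDef (by positivity) ?_
  calc (-(ρ * σ * b)) ^ 2 = b ^ 2 * σ * (ρ ^ 2 * σ) := by ring
    _ < b ^ 2 * σ * σt := by gcongr
    _ = 4 * (σ * σt / 2) * (b ^ 2 / 2) := by ring

theorem sub_mul_optimalInvestment (hgap : σt - ρ ^ 2 * σ ≠ 0) (φ₁ φ₂ : ℝ) :
    (σt - ρ ^ 2 * σ) * optimalInvestment σ σt ρ φ₁ φ₂ =
      (1 - ρ ^ 2) * φ₁ + ρ * √(1 - ρ ^ 2) * φ₂ :=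
  mul_div_cancel₀ _ hgap

theorem sub_mul_optimalLiability (hb : b ≠ 0) (hσt : σt ≠ 0) (hgap : σt - ρ ^ 2 * σ ≠ 0)
    (φ₁ φ₂ : ℝ) :
    (σt - ρ ^ 2 * σ) * (b * optimalLiability σ σt b ρ φ₁ φ₂) =
      σt * √(1 - ρ ^ 2) * φ₂ + ρ * (σ - σt) * φ₁ := by
  rw [optimalLiability, one_sub_div hσt]
  field_simp

theorem polarBilin_insurerRisk_optimal (hb : b ≠ 0) (hσt : σt ≠ 0) (hgap : σt - ρ ^ 2 * σ ≠ 0)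
    (φ₁ φ₂ : ℝ) :
    (insurerRisk σ σt b ρ).polarBilin
        (optimalInvestment σ σt ρ φ₁ φ₂, optimalLiability σ σt b ρ φ₁ φ₂) =
      insurerDrift σ b ρ φ₁ φ₂ := by
  have hπ := sub_mul_optimalInvestment hgap φ₁ φ₂
  have hκ := sub_mul_optimalLiability hb hσt hgap φ₁ φ₂
  rw [insurerRisk, polarBilin_binaryQuadraticForm, insurerDrift]
  congr 1 <;> apply mul_left_cancel₀ hgap
  · linear_combination σ * σt * hπ - ρ * σ * hκ
  · linear_combination b * hκ - ρ * σ * b * hπ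

theorem insurerDrift_optimal (hb : b ≠ 0) (hρ : |ρ| ≤ 1) (hσt : σt ≠ 0)
    (hgap : σt - ρ ^ 2 * σ ≠ 0) (φ₁ φ₂ : ℝ) :
    insurerDrift σ b ρ φ₁ φ₂
        (optimalInvestment σ σt ρ φ₁ φ₂, optimalLiability σ σt b ρ φ₁ φ₂) =
      1 / (1 - ρ ^ 2 * σ / σt) *
        (((1 - 2 * ρ ^ 2) * σ / σt + ρ ^ 2) * φ₁ ^ 2
          + 2 * ρ * √(1 - ρ ^ 2) * (σ / σt - 1) * φ₁ * φ₂
          + (1 - ρ ^ 2) * φ₂ ^ 2) := by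
  have hπ := sub_mul_optimalInvestment hgap φ₁ φ₂
  have hκ := sub_mul_optimalLiability hb hσt hgap φ₁ φ₂
  have hsqrt : √(1 - ρ ^ 2) ^ 2 = 1 - ρ ^ 2 :=
    Real.sq_sqrt (sub_nonneg.2 ((sq_le_one_iff_abs_le_one ρ).2 hρ))
  rw [insurerDrift, binaryLinearForm_apply, one_sub_div hσt, one_div_div,
    div_mul_eq_mul_div, eq_div_iff hgap]
  field_simp
  linear_combination σ * φ₁ * hπ + (√(1 - ρ ^ 2) * φ₂ - ρ * φ₁) * hκ + σt * φ₂ ^ 2 * hsqrt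

end LargeInsurer

theorem large_insurer_objective_strict_concave_unique_max_general
    (σ b ρ ϱ : ℝ) (hσ : 0 < σ) (hb : b ≠ 0) (hρ : |ρ| ≤ 1)
    (σt : ℝ) (hσt : σt = σ - 2 * ϱ / σ) (hσtρ : ρ ^ 2 * σ < σt)
    (φ₁ φ₂ : ℝ) (G : ℝ → ℝ → ℝ)
    (hG : ∀ π κ : ℝ, G π κ =
      σ * φ₁ * π + ϱ * π ^ 2 + (√(1 - ρ ^ 2) * b * φ₂ - ρ * b * φ₁) * κ
        - (1 / 2) * (σ * π - ρ * b * κ) ^ 2 - (1 / 2) * (1 - ρ ^ 2) * b ^ 2 * κ ^ 2)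
    (πs κs : ℝ)
    (hπs : πs = ((1 - ρ ^ 2) * φ₁ + ρ * √(1 - ρ ^ 2) * φ₂) / (σt - ρ ^ 2 * σ))
    (hκs : κs = (√(1 - ρ ^ 2) * φ₂ + ρ * (σ / σt - 1) * φ₁) / ((1 - ρ ^ 2 * σ / σt) * b)) :
    StrictConcaveOn ℝ Set.univ (fun p : ℝ × ℝ ↦ G p.1 p.2) ∧
    (∀ π κ : ℝ, (π, κ) ≠ (πs, κs) → G π κ < G πs κs) ∧
    G πs κs = (1 / 2) * (1 / (1 - ρ ^ 2 * σ / σt)) *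
      (((1 - 2 * ρ ^ 2) * σ / σt + ρ ^ 2) * φ₁ ^ 2
        + 2 * ρ * √(1 - ρ ^ 2) * (σ / σt - 1) * φ₁ * φ₂
        + (1 - ρ ^ 2) * φ₂ ^ 2) := by
  obtain rfl : πs = optimalInvestment σ σt ρ φ₁ φ₂ := hπs
  obtain rfl : κs = optimalLiability σ σt b ρ φ₁ φ₂ := hκs
  have hG_eq (π κ : ℝ) :
      G π κ = insurerDrift σ b ρ φ₁ φ₂ (π, κ) - insurerRisk σ σt b ρ (π, κ) := by
    rw [hG, insurerDrift_sub_insurerRisk hσ.ne' hσt]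
  have hσt_ne : σt ≠ 0 := (lt_of_le_of_lt (by positivity) hσtρ).ne'
  have hgap : σt - ρ ^ 2 * σ ≠ 0 := (sub_pos.2 hσtρ).ne'
  have hrisk := insurerRisk_posDef hσ hb hσtρ
  have hfoc := polarBilin_insurerRisk_optimal hb hσt_ne hgap φ₁ φ₂
  simp only [hG_eq]
  refine ⟨strictConcaveOn_linear_sub_quadraticForm hrisk _,
    fun π κ hne ↦ linear_sub_quadraticForm_lt_of_polarBilin_eq hrisk hfoc hne, ?_⟩
  have hhalf := two_mul_quadraticForm_eq_of_polarBilin_eq hfoc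
  have hdrift := insurerDrift_optimal hb hρ hσt_ne hgap φ₁ φ₂
  rw [mul_assoc, ← hdrift]
  linear_combination (-1 / 2) * hhalf

/-- **Large-insurer objective: strict concavity and unique maximum.**
With `σ̃ = σ − 2ϱ/σ > ρ²σ`, the function
`G̃(π,κ) = σφ̃₁π + ϱπ² + (√(1−ρ²)bφ̃₂ − ρbφ̃₁)κ − (1/2)(σπ−ρbκ)² − (1/2)(1−ρ²)b²κ²`
is strictly concave on `ℝ²` and attains its unique global maximum at
`π* = [(1−ρ²)φ̃₁ + ρ√(1−ρ²)φ̃₂]/(σ̃ − ρ²σ)`,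
`κ* = [√(1−ρ²)φ̃₂ + ρ(σ/σ̃ − 1)φ̃₁]/((1 − ρ²σ/σ̃)b)`, with the stated maximum value. -/
theorem large_insurer_objective_strict_concave_unique_max
    (σ b ρ ϱ : ℝ)
    (hσ : 0 < σ) (hb : 0 < b) (hρ₁ : -1 < ρ) (hρ₂ : ρ < 1)
    (hϱ₀ : 0 ≤ ϱ) (hϱ : ϱ < σ^2 / 2)
    (σt : ℝ) (hσt : σt = σ - 2*ϱ/σ) (hσtρ : ρ^2 * σ < σt)
    (φ₁ φ₂ : ℝ)
    (G : ℝ → ℝ → ℝ)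
    (hG : ∀ π κ : ℝ, G π κ =
      σ*φ₁*π + ϱ*π^2 + (Real.sqrt (1 - ρ^2)*b*φ₂ - ρ*b*φ₁)*κ
        - (1/2)*(σ*π - ρ*b*κ)^2 - (1/2)*(1 - ρ^2)*b^2*κ^2)
    (πs κs : ℝ)
    (hπs : πs = ((1 - ρ^2)*φ₁ + ρ*Real.sqrt (1 - ρ^2)*φ₂) / (σt - ρ^2*σ))
    (hκs : κs = (Real.sqrt (1 - ρ^2)*φ₂ + ρ*(σ/σt - 1)*φ₁) / ((1 - ρ^2*σ/σt)*b)) :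
    StrictConcaveOn ℝ Set.univ (fun p : ℝ × ℝ => G p.1 p.2) ∧
    (∀ π κ : ℝ, (π, κ) ≠ (πs, κs) → G π κ < G πs κs) ∧
    G πs κs = (1/2) * (1/(1 - ρ^2*σ/σt)) *
      (((1 - 2*ρ^2)*σ/σt + ρ^2)*φ₁^2
        + 2*ρ*Real.sqrt (1 - ρ^2)*(σ/σt - 1)*φ₁*φ₂
        + (1 - ρ^2)*φ₂^2) := by
  exact large_insurer_objective_strict_concave_unique_max_general σ b ρ ϱ hσ hb.ne'
    (abs_le.2 ⟨hρ₁.le, hρ₂.le⟩) σt hσt hσtρ φ₁ φ₂ G hG πs κs hπs hκs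
end

section
/- For every y > 0 there is at most one x > 0 with U′(x) = y·e^{U(x)} (equivalently, at most one fixed point of x ↦ I(y·e^{U(x)}) where I is the inverse of U′); if moreover U′(x)·e^{−U(x)} → ∞ as x → 0⁺ and U′(x)·e^{−U(x)} → 0 as x → ∞, then for every y > 0 there is exactly one such x, denoted Ĩ(y), and Ĩ : (0,∞) → (0,∞) is strictly decreasing. In particular, for U = log one has Ĩ(y) = 1/√y for every y > 0. -/
open Set Filter

/-!
The solutions of `U' = y · exp U` are the points where `g = U' · exp (-U)` takes the value `y`.
Since `g` is the derivative of `-exp (-U)`, Darboux's theorem gives it the intermediate value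
property, so its two limits make it surjective onto `(0, ∞)`. Where `g` is positive, so is `U'`;
as `U'` is antitone, `U` is strictly increasing there, and `g` is the product of an antitone and a
strictly decreasing positive factor. Hence `g` is strictly decreasing where it is positive, and
`Ĩ` is its inverse.
-/

theorem mul_exp_neg_eq_iff {a b y : ℝ} : a * Real.exp (-b) = y ↔ a = y * Real.exp b := by
  rw [Real.exp_neg, ← div_eq_mul_inv, div_eq_iff (Real.exp_ne_zero b)]

theorem surjOn_Ioi_of_ordConnected_image {α β : Type*} [LinearOrder β] [TopologicalSpace β]
    [ClosedIciTopology β] {f : α → β} {s : Set α} {l₁ l₂ : Filter α} [NeBot l₁] [NeBot l₂] {c : β}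
    (hfs : OrdConnected (f '' s)) (hl₁ : s ∈ l₁) (hl₂ : s ∈ l₂)
    (htop : Tendsto f l₁ atTop) (hc : Tendsto f l₂ (nhds c)) : SurjOn f s (Ioi c) := by
  intro y hy
  obtain ⟨x₁, hyx₁, hx₁⟩ := ((htop.eventually_ge_atTop y).and hl₁).exists
  obtain ⟨x₂, hx₂y, hx₂⟩ := ((hc.eventually_lt_const hy).and hl₂).exists
  exact hfs.out (mem_image_of_mem f hx₂) (mem_image_of_mem f hx₁) ⟨hx₂y.le, hyx₁⟩

theorem strictAntiOn_invFunOn {α β : Type*} [LinearOrder α] [Nonempty α] [Preorder β] {g : α → β}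
    {s : Set α} {t : Set β} (hg : StrictAntiOn g s) (hst : SurjOn g s t) :
    StrictAntiOn (Function.invFunOn g s) t := by
  intro a ha b hb hab
  have hlt : g (Function.invFunOn g s a) < g (Function.invFunOn g s b) := by
    rwa [hst.rightInvOn_invFunOn ha, hst.rightInvOn_invFunOn hb]
  exact (hg.lt_iff_gt (hst.mapsTo_invFunOn ha) (hst.mapsTo_invFunOn hb)).mp hlt

section MulExpNeg

variable {U U' : ℝ → ℝ} {s : Set ℝ}

theorem ordConnected_image_mul_exp_neg (hs : OrdConnected s)
    (hU : ∀ x ∈ s, HasDerivWithinAt U (U' x) s x) :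
    OrdConnected ((fun x => U' x * Real.exp (-(U x))) '' s) := by
  refine hs.image_hasDerivWithinAt (f := fun x => -Real.exp (-(U x))) fun x hx => ?_
  exact (hU x hx).fun_neg.exp.fun_neg.congr_deriv (by ring)

theorem strictMonoOn_setOf_deriv_pos (hs : OrdConnected s)
    (hU : ∀ x ∈ s, HasDerivWithinAt U (U' x) s x) (hanti : AntitoneOn U' s) :
    StrictMonoOn U {x ∈ s | 0 < U' x} := by
  have hconn : OrdConnected {x ∈ s | 0 < U' x} := ⟨fun a ha b hb x hx =>
    have hxs : x ∈ s := hs.out ha.1 hb.1 hx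
    ⟨hxs, hb.2.trans_le (hanti hxs hb.1 hx.2)⟩⟩
  exact strictMonoOn_of_hasDerivWithinAt_pos (f' := U') hconn.convex
    (fun x hx => (hU x hx.1).continuousWithinAt.mono (sep_subset _ _))
    (fun x hx => (hU x (interior_subset hx).1).mono (interior_subset.trans (sep_subset _ _)))
    fun x hx => (interior_subset hx).2

theorem strictAntiOn_mul_exp_neg (hs : OrdConnected s)
    (hU : ∀ x ∈ s, HasDerivWithinAt U (U' x) s x) (hanti : AntitoneOn U' s) :
    StrictAntiOn (fun x => U' x * Real.exp (-(U x))) {x ∈ s | 0 < U' x} := by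
  intro a ha b hb hab
  have hUab : U a < U b := strictMonoOn_setOf_deriv_pos hs hU hanti ha hb hab
  calc U' b * Real.exp (-(U b))
      < U' b * Real.exp (-(U a)) :=
        mul_lt_mul_of_pos_left (Real.exp_lt_exp.mpr (neg_lt_neg hUab)) hb.2
    _ ≤ U' a * Real.exp (-(U a)) :=
        mul_le_mul_of_nonneg_right (hanti ha.1 hb.1 hab.le) (Real.exp_pos _).le

theorem eq_of_eq_mul_exp (hs : OrdConnected s) (hU : ∀ x ∈ s, HasDerivWithinAt U (U' x) s x)
    (hanti : AntitoneOn U' s) {y x₁ x₂ : ℝ} (hy : 0 < y) (hx₁ : x₁ ∈ s) (hx₂ : x₂ ∈ s)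
    (h₁ : U' x₁ = y * Real.exp (U x₁)) (h₂ : U' x₂ = y * Real.exp (U x₂)) : x₁ = x₂ :=
  (strictAntiOn_mul_exp_neg hs hU hanti).injOn
    ⟨hx₁, h₁ ▸ mul_pos hy (Real.exp_pos _)⟩ ⟨hx₂, h₂ ▸ mul_pos hy (Real.exp_pos _)⟩
    ((mul_exp_neg_eq_iff.mpr h₁).trans (mul_exp_neg_eq_iff.mpr h₂).symm)

theorem exists_strictAntiOn_eq_mul_exp (hs : OrdConnected s)
    (hU : ∀ x ∈ s, HasDerivWithinAt U (U' x) s x) (hanti : AntitoneOn U' s)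
    (hsurj : SurjOn (fun x => U' x * Real.exp (-(U x))) s (Ioi 0)) :
    ∃ Itil : ℝ → ℝ, (∀ y, 0 < y → Itil y ∈ s ∧ U' (Itil y) = y * Real.exp (U (Itil y))) ∧
      StrictAntiOn Itil (Ioi 0) := by
  have hsurj_pos : SurjOn (fun x => U' x * Real.exp (-(U x))) {x ∈ s | 0 < U' x} (Ioi 0) := by
    intro y hy
    obtain ⟨x, hx, rfl⟩ := hsurj hy
    exact ⟨x, ⟨hx, pos_of_mul_pos_left hy (Real.exp_pos _).le⟩, rfl⟩
  exact ⟨_, fun y hy => ⟨(hsurj_pos.mapsTo_invFunOn hy).1,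
    mul_exp_neg_eq_iff.mp (hsurj_pos.rightInvOn_invFunOn hy)⟩,
    strictAntiOn_invFunOn (strictAntiOn_mul_exp_neg hs hU hanti) hsurj_pos⟩

end MulExpNeg

theorem inv_one_div_sqrt_eq_mul_exp_log {y : ℝ} (hy : 0 < y) :
    (1 / √y)⁻¹ = y * Real.exp (Real.log (1 / √y)) := by
  rw [Real.exp_log (one_div_pos.mpr (Real.sqrt_pos.mpr hy)), one_div, inv_inv, ← div_eq_mul_inv,
    Real.div_sqrt]

theorem eq_inv_of_hasDerivAt_of_eqOn_log {U : ℝ → ℝ} {u x : ℝ} (hlog : EqOn U Real.log (Ioi 0))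
    (hx : 0 < x) (hU : HasDerivAt U u x) : u = x⁻¹ :=
  hU.unique ((Real.hasDerivAt_log hx.ne').congr_of_eventuallyEq
    (hlog.eventuallyEq_of_mem (Ioi_mem_nhds hx)))

theorem fixed_point_function_of_inverse_marginal_utility_general
    (U U' : ℝ → ℝ)
    (hderiv : ∀ x ∈ Ioi (0 : ℝ), HasDerivAt U (U' x) x)
    (hanti : AntitoneOn U' (Ioi (0 : ℝ))) :
    (∀ y : ℝ, 0 < y → ∀ x₁ ∈ Ioi (0 : ℝ), ∀ x₂ ∈ Ioi (0 : ℝ),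
      U' x₁ = y * Real.exp (U x₁) → U' x₂ = y * Real.exp (U x₂) → x₁ = x₂) ∧
    ((Tendsto (fun x => U' x * Real.exp (-(U x))) (nhdsWithin 0 (Ioi 0)) atTop) →
      (Tendsto (fun x => U' x * Real.exp (-(U x))) atTop (nhds 0)) →
      ∃ Itil : ℝ → ℝ,
        (∀ y : ℝ, 0 < y → 0 < Itil y ∧ U' (Itil y) = y * Real.exp (U (Itil y))) ∧
        StrictAntiOn Itil (Ioi (0 : ℝ))) ∧
    ((∀ t ∈ Ioi (0 : ℝ), U t = Real.log t) →
      ∀ y : ℝ, 0 < y →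
        0 < 1 / Real.sqrt y ∧
        U' (1 / Real.sqrt y) = y * Real.exp (U (1 / Real.sqrt y))) := by
  have hU : ∀ x ∈ Ioi (0 : ℝ), HasDerivWithinAt U (U' x) (Ioi 0) x := fun x hx =>
    (hderiv x hx).hasDerivWithinAt
  refine ⟨fun y hy x₁ hx₁ x₂ hx₂ => eq_of_eq_mul_exp ordConnected_Ioi hU hanti hy hx₁ hx₂,
    fun hzero hinfty => ?_, fun hlog y hy => ?_⟩
  · have hsurj : SurjOn (fun x => U' x * Real.exp (-(U x))) (Ioi 0) (Ioi 0) :=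
      surjOn_Ioi_of_ordConnected_image (l₁ := nhdsWithin 0 (Ioi 0))
        (ordConnected_image_mul_exp_neg ordConnected_Ioi hU)
        self_mem_nhdsWithin (Ioi_mem_atTop 0) hzero hinfty
    exact exists_strictAntiOn_eq_mul_exp ordConnected_Ioi hU hanti hsurj
  · have hpos : 0 < 1 / √y := one_div_pos.mpr (Real.sqrt_pos.mpr hy)
    refine ⟨hpos, ?_⟩
    rw [eq_inv_of_hasDerivAt_of_eqOn_log hlog hpos (hderiv _ hpos), hlog _ hpos]
    exact inv_one_div_sqrt_eq_mul_exp_log hy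

/-- **The fixed point function of the inverse marginal utility.**
Let `U` be a utility function on `(0,∞)` (continuously differentiable, strictly increasing,
with strictly decreasing derivative `U'`). Then for every `y > 0` there is at most one
`x > 0` with `U'(x) = y·e^{U(x)}`; if moreover `U'(x)e^{−U(x)} → ∞` as `x → 0⁺` and
`U'(x)e^{−U(x)} → 0` as `x → ∞`, there is exactly one such `x =: Ĩ(y)`, and
`Ĩ : (0,∞) → (0,∞)` is strictly decreasing. In particular, for `U = log`,
`Ĩ(y) = 1/√y`. -/
theorem fixed_point_function_of_inverse_marginal_utility
    (U U' : ℝ → ℝ)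
    (hderiv : ∀ x ∈ Ioi (0:ℝ), HasDerivAt U (U' x) x)
    (hcont : ContinuousOn U' (Ioi (0:ℝ)))
    (hmono : StrictMonoOn U (Ioi (0:ℝ)))
    (hanti : StrictAntiOn U' (Ioi (0:ℝ))) :
    (∀ y : ℝ, 0 < y → ∀ x₁ ∈ Ioi (0:ℝ), ∀ x₂ ∈ Ioi (0:ℝ),
      U' x₁ = y * Real.exp (U x₁) → U' x₂ = y * Real.exp (U x₂) → x₁ = x₂) ∧
    ((Tendsto (fun x => U' x * Real.exp (-(U x))) (nhdsWithin 0 (Ioi 0)) atTop) →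
      (Tendsto (fun x => U' x * Real.exp (-(U x))) atTop (nhds 0)) →
      ∃ Itil : ℝ → ℝ,
        (∀ y : ℝ, 0 < y → 0 < Itil y ∧ U' (Itil y) = y * Real.exp (U (Itil y))) ∧
        StrictAntiOn Itil (Ioi (0:ℝ))) ∧
    ((∀ t ∈ Ioi (0:ℝ), U t = Real.log t) →
      ∀ y : ℝ, 0 < y →
        0 < 1 / Real.sqrt y ∧
        U' (1 / Real.sqrt y) = y * Real.exp (U (1 / Real.sqrt y))) :=
  fixed_point_function_of_inverse_marginal_utility_general U U' hderiv hanti.antitoneOn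
end

section
/- The function ΔV : (T, ∞) → ℝ defined by ΔV(T₀) = −(1/2)·log(1 − T²/(2T₀−T)²) + T/(2(2T₀−T)) + K/(4(2T₀−T)) is strictly positive on (T, ∞), strictly decreasing on (T, ∞), and tends to 0 as T₀ → ∞. -/
open Set Filter

/-!
Everything depends on `T₀` only through the ratio `u = T / (2 * T₀ - T)`, which decreases strictly
from `1` to `0` as `T₀` runs through `(T, ∞)`. In terms of `u` the gain is
`-(1/2) * log (1 - u ^ 2) + c * u` with `c = 1/2 + K / (4 * T)`; for `c ≥ 0` this is strictly
increasing on `[0, 1)`, vanishes at `0` and is continuous there, which gives the three claims.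
-/

/-- The ratio `T / (2 * T₀ - T)` through which the gain depends on the time `T₀` of the insider's
information, for a fixed horizon `T`. -/
noncomputable def horizonRatio (T T₀ : ℝ) : ℝ := T / (2 * T₀ - T)

/-- The utility gain as a function of the horizon ratio `u`, with the two terms that are linear in
`u` collected into a single coefficient `c`. -/
noncomputable def gainOfRatio (c u : ℝ) : ℝ := -(1 / 2) * Real.log (1 - u ^ 2) + c * u

theorem gainOfRatio_zero (c : ℝ) : gainOfRatio c 0 = 0 := by
  simp [gainOfRatio]

theorem strictAntiOn_log_one_sub_sq :
    StrictAntiOn (fun u : ℝ ↦ Real.log (1 - u ^ 2)) (Ico 0 1) := by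
  rintro u ⟨hu, -⟩ v ⟨-, hv⟩ huv
  have hv_sq : v ^ 2 < 1 := pow_lt_one₀ (hu.trans huv.le) hv two_ne_zero
  have huv_sq : u ^ 2 < v ^ 2 := pow_lt_pow_left₀ huv hu two_ne_zero
  exact Real.log_lt_log (sub_pos.2 hv_sq) (sub_lt_sub_left huv_sq 1)

theorem strictMonoOn_gainOfRatio {c : ℝ} (hc : 0 ≤ c) :
    StrictMonoOn (gainOfRatio c) (Ico 0 1) := by
  intro u hu v hv huv
  have hlog : Real.log (1 - v ^ 2) < Real.log (1 - u ^ 2) := strictAntiOn_log_one_sub_sq hu hv huv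
  have hlin : c * u ≤ c * v := mul_le_mul_of_nonneg_left huv.le hc
  unfold gainOfRatio
  linarith

theorem gainOfRatio_pos {c u : ℝ} (hc : 0 ≤ c) (hu : u ∈ Ioo 0 1) : 0 < gainOfRatio c u :=
  gainOfRatio_zero c ▸
    strictMonoOn_gainOfRatio hc (left_mem_Ico.2 one_pos) (Ioo_subset_Ico_self hu) hu.1

theorem continuousAt_gainOfRatio (c : ℝ) {u : ℝ} (hu : u ^ 2 ≠ 1) :
    ContinuousAt (gainOfRatio c) u := by
  have hlog : ContinuousAt (fun u : ℝ ↦ Real.log (1 - u ^ 2)) u :=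
    ContinuousAt.log (by fun_prop) (sub_ne_zero.2 hu.symm)
  exact (hlog.const_mul _).add (by fun_prop)

theorem horizonRatio_mem_Ioo {T T₀ : ℝ} (hT : 0 < T) (hT₀ : T < T₀) :
    horizonRatio T T₀ ∈ Ioo 0 1 := by
  have hden : T < 2 * T₀ - T := by linarith
  exact ⟨div_pos hT (hT.trans hden), (div_lt_one (hT.trans hden)).2 hden⟩

theorem strictAntiOn_horizonRatio {T : ℝ} (hT : 0 < T) :
    StrictAntiOn (horizonRatio T) (Ioi (T / 2)) := by
  intro s hs t _ hst
  have hden : 0 < 2 * s - T := by linarith [mem_Ioi.1 hs]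
  exact div_lt_div_of_pos_left hT hden (by linarith)

theorem tendsto_horizonRatio_atTop (T : ℝ) : Tendsto (horizonRatio T) atTop (nhds 0) :=
  tendsto_const_nhds.div_atTop <|
    tendsto_atTop_add_const_right _ (-T) (tendsto_id.const_mul_atTop two_pos)

theorem gainOfRatio_horizonRatio {T : ℝ} (hT : T ≠ 0) (K T₀ : ℝ) :
    gainOfRatio (1 / 2 + K / (4 * T)) (horizonRatio T T₀) =
      -(1 / 2) * Real.log (1 - T ^ 2 / (2 * T₀ - T) ^ 2)
        + T / (2 * (2 * T₀ - T)) + K / (4 * (2 * T₀ - T)) := by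
  have hlin : (1 / 2 + K / (4 * T)) * (T / (2 * T₀ - T)) =
      T / (2 * (2 * T₀ - T)) + K / (4 * (2 * T₀ - T)) := by
    field_simp
  rw [gainOfRatio, horizonRatio, div_pow, hlin, add_assoc]

theorem insider_utility_gain_positive_decreasing_general
    (T K : ℝ) (hT : 0 < T) (hK : -(2 * T) ≤ K)
    (ΔV : ℝ → ℝ)
    (hΔV : ∀ T₀ : ℝ, T < T₀ →
      ΔV T₀ = -(1 / 2) * Real.log (1 - T ^ 2 / (2 * T₀ - T) ^ 2)
        + T / (2 * (2 * T₀ - T)) + K / (4 * (2 * T₀ - T))) :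
    (∀ T₀ : ℝ, T < T₀ → 0 < ΔV T₀) ∧
    StrictAntiOn ΔV (Ioi T) ∧
    Tendsto ΔV atTop (nhds 0) := by
  have hc : 0 ≤ 1 / 2 + K / (4 * T) := by
    have hsum : 1 / 2 + K / (4 * T) = (2 * T + K) / (4 * T) := by field_simp; ring
    exact hsum ▸ div_nonneg (by linarith) (by positivity)
  have hgain : EqOn (gainOfRatio (1 / 2 + K / (4 * T)) ∘ horizonRatio T) ΔV (Ioi T) :=
    fun T₀ hT₀ ↦ (gainOfRatio_horizonRatio hT.ne' K T₀).trans (hΔV T₀ hT₀).symm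
  have hratio : MapsTo (horizonRatio T) (Ioi T) (Ioo 0 1) :=
    fun _ hT₀ ↦ horizonRatio_mem_Ioo hT hT₀
  refine ⟨fun T₀ hT₀ ↦ hgain hT₀ ▸ gainOfRatio_pos hc (hratio hT₀), ?_, ?_⟩
  · have hanti : StrictAntiOn (horizonRatio T) (Ioi T) :=
      (strictAntiOn_horizonRatio hT).mono (Ioi_subset_Ioi (half_le_self hT.le))
    exact ((strictMonoOn_gainOfRatio hc).comp_strictAntiOn hanti
      (hratio.mono_right Ioo_subset_Ico_self)).congr hgain
  · have hlim := (continuousAt_gainOfRatio (1 / 2 + K / (4 * T)) (u := 0) (by simp)).tendsto.comp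
      (tendsto_horizonRatio_atTop T)
    rw [gainOfRatio_zero] at hlim
    exact hlim.congr' (hgain.eventuallyEq_of_mem (Ioi_mem_atTop T))

/-- **Utility gain from insider information is positive and decreasing in the future time.**
For `T > 0` and `K ≥ 0`, the function
`ΔV(T₀) = −(1/2)log(1 − T²/(2T₀−T)²) + T/(2(2T₀−T)) + K/(4(2T₀−T))` on `(T, ∞)`
is strictly positive, strictly decreasing, and tends to `0` as `T₀ → ∞`. -/
theorem insider_utility_gain_positive_decreasing
    (T K : ℝ) (hT : 0 < T) (hK : 0 ≤ K)
    (ΔV : ℝ → ℝ)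
    (hΔV : ∀ T₀ : ℝ, T < T₀ →
      ΔV T₀ = -(1/2) * Real.log (1 - T^2/(2*T₀ - T)^2)
        + T/(2*(2*T₀ - T)) + K/(4*(2*T₀ - T))) :
    (∀ T₀ : ℝ, T < T₀ → 0 < ΔV T₀) ∧
    StrictAntiOn ΔV (Ioi T) ∧
    Tendsto ΔV atTop (nhds 0) :=
  insider_utility_gain_positive_decreasing_general T K hT (by linarith) ΔV hΔV
end

section
/- For all T₀ > T > 0, all ρ ∈ (−1,1), and all square-integrable measurable functions ι, c : [0,T] → ℝ, the following inequality holds: (1/2)·log((1 − T²/(2T₀−T)²)^{−1}) + T/(2(2T₀−T)) − (1/2)·log(T₀/(T₀−T)) + (1/(4(2T₀−T)))·(∫₀^T c(t) dt)² − (1/4)·∫₀^T [ι(t)² + (c(t) + ρ·ι(t))²/(1−ρ²)] dt ≤ 0. -/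
open MeasureTheory Set

/-!
With `u = T / (2T₀ - T)` one has `T₀ / (T₀ - T) = (1 + u) / (1 - u)`, so the terms free of `ι` and
`c` add up to `(u - 2 log (1 + u)) / 2`, which is nonpositive for `0 ≤ u ≤ 2`. Completing the square
the other way, `ι² + (c + ρι)² / (1 - ρ²) = c² + (ι + ρc)² / (1 - ρ²) ≥ c²`, so the remaining terms
are controlled by the Cauchy–Schwarz inequality `(∫ c)² ≤ T ∫ c²` and `T ≤ 2T₀ - T`.
-/

section Logarithm

variable {u : ℝ}

lemma le_two_mul_log_one_add (hu₀ : 0 ≤ u) (hu₂ : u ≤ 2) : u ≤ 2 * Real.log (1 + u) := by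
  have half_le : u / 2 ≤ 2 * u / (u + 2) := by
    rw [div_le_div_iff₀ two_pos (by linarith)]
    nlinarith
  linarith [Real.le_log_one_add_of_nonneg hu₀]

lemma log_inv_one_sub_sq (hu : u ≠ 1) (hu' : u ≠ -1) :
    Real.log (1 - u ^ 2)⁻¹ = Real.log ((1 + u) / (1 - u)) - 2 * Real.log (1 + u) := by
  have one_add_ne : 1 + u ≠ 0 := fun h ↦ hu' (by linarith)
  have one_sub_ne : 1 - u ≠ 0 := sub_ne_zero.mpr hu.symm
  rw [show 1 - u ^ 2 = (1 + u) * (1 - u) by ring, Real.log_inv, Real.log_mul one_add_ne one_sub_ne,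
    Real.log_div one_add_ne one_sub_ne]
  ring

lemma log_inv_one_sub_div_sq_add_le_log_div {T T₀ : ℝ} (hT : 0 ≤ T) (hTT₀ : T < T₀) :
    Real.log (1 - T ^ 2 / (2 * T₀ - T) ^ 2)⁻¹ + T / (2 * T₀ - T) ≤ Real.log (T₀ / (T₀ - T)) := by
  have den_pos : 0 < 2 * T₀ - T := by linarith
  set u := T / (2 * T₀ - T) with hu
  have u_nonneg : 0 ≤ u := by positivity
  have u_lt_one : u < 1 := by rw [hu, div_lt_one den_pos]; linarith
  have ratio_eq : T₀ / (T₀ - T) = (1 + u) / (1 - u) := by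
    have one_sub_u : 1 - u = 2 * (T₀ - T) / (2 * T₀ - T) := by rw [hu]; field_simp; ring
    have one_add_u : 1 + u = 2 * T₀ / (2 * T₀ - T) := by rw [hu]; field_simp; ring
    rw [one_sub_u, one_add_u, div_div_div_cancel_right₀ den_pos.ne',
      mul_div_mul_left _ _ two_ne_zero]
  rw [← div_pow, ← hu, ratio_eq, log_inv_one_sub_sq u_lt_one.ne (by linarith)]
  linarith [le_two_mul_log_one_add u_nonneg (by linarith)]

end Logarithm

lemma sq_le_sq_add_sq_add_mul_div_one_sub_sq {K : Type*} [Field K] [LinearOrder K]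
    [IsStrictOrderedRing K] {ρ : K} (hρ : |ρ| < 1) (x y : K) :
    x ^ 2 ≤ y ^ 2 + (x + ρ * y) ^ 2 / (1 - ρ ^ 2) := by
  have one_sub_sq_pos : 0 < 1 - ρ ^ 2 := sub_pos.mpr ((sq_lt_one_iff_abs_lt_one ρ).mpr hρ)
  calc x ^ 2 ≤ x ^ 2 + (y + ρ * x) ^ 2 / (1 - ρ ^ 2) := le_add_of_nonneg_right (by positivity)
    _ = y ^ 2 + (x + ρ * y) ^ 2 / (1 - ρ ^ 2) := by field_simp; ring

section Integral

variable {α : Type*} [MeasurableSpace α] {μ : Measure α}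

lemma sq_norm_integral_le_measureReal_univ_mul_integral_sq_norm [IsFiniteMeasure μ] {E : Type*}
    [NormedAddCommGroup E] [NormedSpace ℝ E] {f : α → E} (hf : MemLp f 2 μ) :
    ‖∫ x, f x ∂μ‖ ^ 2 ≤ μ.real univ * ∫ x, ‖f x‖ ^ 2 ∂μ := by
  have holder : ∫ x, ‖f x‖ ∂μ ≤ √(∫ x, ‖f x‖ ^ 2 ∂μ) * √(μ.real univ) := by
    simpa [Real.sqrt_eq_rpow] using
      integral_mul_norm_le_Lp_mul_Lq (f := fun x ↦ ‖f x‖) (g := fun _ ↦ (1 : ℝ)) (μ := μ)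
        Real.HolderConjugate.two_two (by simpa using hf.norm) (memLp_const 1)
  calc ‖∫ x, f x ∂μ‖ ^ 2
      ≤ (√(∫ x, ‖f x‖ ^ 2 ∂μ) * √(μ.real univ)) ^ 2 := by
        gcongr
        exact (norm_integral_le_integral_norm f).trans holder
    _ = μ.real univ * ∫ x, ‖f x‖ ^ 2 ∂μ := by
        rw [mul_pow, Real.sq_sqrt (by positivity), Real.sq_sqrt (by positivity), mul_comm]

lemma integral_sq_le_integral_sq_add_sq_add_mul_div_one_sub_sq {f g : α → ℝ} {ρ : ℝ}
    (hf : MemLp f 2 μ) (hg : MemLp g 2 μ) (hρ : |ρ| < 1) :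
    ∫ x, f x ^ 2 ∂μ ≤ ∫ x, (g x ^ 2 + (f x + ρ * g x) ^ 2 / (1 - ρ ^ 2)) ∂μ :=
  integral_mono hf.integrable_sq
    (hg.integrable_sq.add ((hf.add (hg.const_mul ρ)).integrable_sq.div_const _))
    fun x ↦ sq_le_sq_add_sq_add_mul_div_one_sub_sq hρ (f x) (g x)

theorem robust_value_le_neutral_value_with_insider_general [IsFiniteMeasure μ] {T T₀ ρ : ℝ}
    (hT : 0 ≤ T) (hTT₀ : T < T₀) (hμ : μ.real univ ≤ 2 * T₀ - T) (hρ : |ρ| < 1)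
    {ι c : α → ℝ} (hι : MemLp ι 2 μ) (hc : MemLp c 2 μ) :
    (1 / 2) * Real.log ((1 - T ^ 2 / (2 * T₀ - T) ^ 2)⁻¹) + T / (2 * (2 * T₀ - T))
        - (1 / 2) * Real.log (T₀ / (T₀ - T))
        + (1 / (4 * (2 * T₀ - T))) * (∫ t, c t ∂μ) ^ 2
        - (1 / 4) * (∫ t, (ι t ^ 2 + (c t + ρ * ι t) ^ 2 / (1 - ρ ^ 2)) ∂μ)
      ≤ 0 := by
  have den_pos : 0 < 2 * T₀ - T := by linarith
  have log_terms := log_inv_one_sub_div_sq_add_le_log_div hT hTT₀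
  have integral_terms : (∫ t, c t ∂μ) ^ 2 / (2 * T₀ - T)
      ≤ ∫ t, (ι t ^ 2 + (c t + ρ * ι t) ^ 2 / (1 - ρ ^ 2)) ∂μ := by
    rw [div_le_iff₀' den_pos]
    calc (∫ t, c t ∂μ) ^ 2 ≤ μ.real univ * ∫ t, c t ^ 2 ∂μ := by
          simpa using sq_norm_integral_le_measureReal_univ_mul_integral_sq_norm hc
      _ ≤ (2 * T₀ - T) * ∫ t, (ι t ^ 2 + (c t + ρ * ι t) ^ 2 / (1 - ρ ^ 2)) ∂μ := by
          refine mul_le_mul hμ ?_ (by positivity) den_pos.le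
          exact integral_sq_le_integral_sq_add_sq_add_mul_div_one_sub_sq hc hι hρ
  rw [div_mul_eq_div_div_swap T, one_div_mul_eq_div (4 * _), div_mul_eq_div_div_swap (_ ^ 2)]
  linarith

end Integral

/-- **Ambiguity aversion cannot beat ambiguity neutrality under the same insider information.**
For all `T₀ > T > 0`, `ρ ∈ (−1,1)` and square-integrable measurable `ι, c : [0,T] → ℝ`:
`(1/2)log((1 − T²/(2T₀−T)²)⁻¹) + T/(2(2T₀−T)) − (1/2)log(T₀/(T₀−T))
 + (1/(4(2T₀−T)))(∫₀^T c)² − (1/4)∫₀^T [ι² + (c+ρι)²/(1−ρ²)] ≤ 0`. -/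
theorem robust_value_le_neutral_value_with_insider
    (T T₀ ρ : ℝ) (hT : 0 < T) (hTT₀ : T < T₀)
    (hρ₁ : -1 < ρ) (hρ₂ : ρ < 1)
    (ι c : ℝ → ℝ) (hι : Measurable ι) (hc : Measurable c)
    (hι2 : IntegrableOn (fun t => (ι t)^2) (Icc 0 T))
    (hc2 : IntegrableOn (fun t => (c t)^2) (Icc 0 T)) :
    (1/2) * Real.log ((1 - T^2/(2*T₀ - T)^2)⁻¹) + T/(2*(2*T₀ - T))
        - (1/2) * Real.log (T₀/(T₀ - T))
        + (1/(4*(2*T₀ - T))) * (∫ t in Icc 0 T, c t)^2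
        - (1/4) * (∫ t in Icc 0 T, ((ι t)^2 + (c t + ρ * ι t)^2/(1 - ρ^2)))
      ≤ 0 := by
  have mass_le : (volume.restrict (Icc 0 T)).real univ ≤ 2 * T₀ - T := by
    rw [measureReal_restrict_apply_univ, Real.volume_real_Icc_of_le hT.le]
    linarith
  exact robust_value_le_neutral_value_with_insider_general hT.le hTT₀ mass_le
    (abs_lt.mpr ⟨hρ₁, hρ₂⟩) ((memLp_two_iff_integrable_sq hι.aestronglyMeasurable).mpr hι2)
    ((memLp_two_iff_integrable_sq hc.aestronglyMeasurable).mpr hc2)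
end

section
/- Let ι ∈ ℝ and c > 0. Then the equation ι² + c² − (c² + 2)/(2T₀ − 1) = −2·log(1 − 1/(2T₀−1)²) has exactly one solution T₀* in (1, ∞). Moreover, T₀* is strictly decreasing in ι²: if ι₁² < ι₂² and T₀*(ι₁), T₀*(ι₂) denote the corresponding unique solutions (with the same c), then T₀*(ι₂) < T₀*(ι₁). -/
open Set

/-!
In the variable `x = 1 / (2T₀ - 1)`, which runs decreasingly through `(0, 1)` as `T₀` runs through
`(1, ∞)`, the equation reads `ι² + c² = (c² + 2)x - 2 log (1 - x²)`. The right-hand side increases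
strictly and continuously from `0` at `x = 0` to `∞` as `x → 1`, so it attains each positive value
exactly once, and a larger value of `ι²` forces a larger `x`, that is, a smaller `T₀`.
-/

open Filter Topology

/-- The level `a * x - 2 * log (1 - x ^ 2)` that `ι ^ 2 + c ^ 2` must equal for the future time
with `x = (2 * T₀ - 1)⁻¹` to be critical, where `a` stands for `c ^ 2 + 2`. It is meant for
`|x| < 1`; elsewhere the logarithm takes junk values. -/
noncomputable def criticalLevel (a x : ℝ) : ℝ := a * x - 2 * Real.log (1 - x ^ 2)

/-- The change of variable `T ↦ 1 / (2T - 1)` from future times `T > 1` to the interval `(0, 1)`,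
in which the critical time equation becomes monotone in each of its terms. -/
noncomputable def reciprocalTime (T : ℝ) : ℝ := (2 * T - 1)⁻¹

lemma criticalLevel_zero (a : ℝ) : criticalLevel a 0 = 0 := by
  simp [criticalLevel]

lemma strictMonoOn_criticalLevel {a : ℝ} (ha : 0 ≤ a) :
    StrictMonoOn (criticalLevel a) (Ico 0 1) := by
  intro x hx y hy hxy
  have sq_lt : x ^ 2 < y ^ 2 := pow_lt_pow_left₀ hxy hx.1 two_ne_zero
  have sq_lt_one : y ^ 2 < 1 := pow_lt_one₀ hy.1 hy.2 two_ne_zero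
  have log_lt : Real.log (1 - y ^ 2) < Real.log (1 - x ^ 2) :=
    Real.log_lt_log (by linarith) (by linarith)
  have mul_le : a * x ≤ a * y := mul_le_mul_of_nonneg_left hxy.le ha
  unfold criticalLevel
  linarith

lemma continuousOn_criticalLevel (a : ℝ) : ContinuousOn (criticalLevel a) (Ioo (-1) 1) := by
  have log_arg_ne_zero : ∀ x ∈ Ioo (-1 : ℝ) 1, 1 - x ^ 2 ≠ 0 := fun x hx =>
    (sub_pos.2 ((sq_lt_one_iff_abs_lt_one x).2 (abs_lt.2 hx))).ne'
  unfold criticalLevel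
  fun_prop (disch := assumption)

lemma tendsto_criticalLevel_nhdsLT_one (a : ℝ) :
    Tendsto (criticalLevel a) (𝓝[<] 1) atTop := by
  have log_arg_tendsto : Tendsto (fun x : ℝ => 1 - x ^ 2) (𝓝[<] 1) (𝓝[>] 0) := by
    refine tendsto_nhdsWithin_iff.2 ⟨?_, ?_⟩
    · exact (Continuous.tendsto' (by fun_prop) 1 0 (by norm_num)).mono_left nhdsWithin_le_nhds
    · filter_upwards [Ioo_mem_nhdsLT (zero_lt_one' ℝ)] with x hx
      exact sub_pos.2 (pow_lt_one₀ hx.1.le hx.2 two_ne_zero)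
  have log_tendsto : Tendsto (fun x : ℝ => -2 * Real.log (1 - x ^ 2)) (𝓝[<] 1) atTop :=
    (Real.tendsto_log_nhdsGT_zero.comp log_arg_tendsto).const_mul_atBot_of_neg (by norm_num)
  have linear_tendsto : Tendsto (fun x : ℝ => a * x) (𝓝[<] 1) (𝓝 (a * 1)) :=
    (Continuous.tendsto (by fun_prop) 1).mono_left nhdsWithin_le_nhds
  refine (linear_tendsto.add_atTop log_tendsto).congr fun x => ?_
  unfold criticalLevel
  ring

lemma surjOn_criticalLevel (a : ℝ) : SurjOn (criticalLevel a) (Ioo 0 1) (Ioi 0) := by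
  have tendsto_zero : Tendsto (criticalLevel a) (𝓝[>] 0) (𝓝 0) := by
    have continuousAt_zero : ContinuousAt (criticalLevel a) 0 :=
      (continuousOn_criticalLevel a).continuousAt (Ioo_mem_nhds (by norm_num) one_pos)
    simpa only [criticalLevel_zero] using continuousAt_zero.tendsto.mono_left nhdsWithin_le_nhds
  exact isPreconnected_Ioo.intermediate_value_Ioi
    (le_principal_iff.2 (Ioo_mem_nhdsGT one_pos)) (le_principal_iff.2 (Ioo_mem_nhdsLT one_pos))
    ((continuousOn_criticalLevel a).mono (Ioo_subset_Ioo_left (by norm_num)))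
    tendsto_zero (tendsto_criticalLevel_nhdsLT_one a)

lemma bijOn_criticalLevel {a : ℝ} (ha : 0 ≤ a) :
    BijOn (criticalLevel a) (Ioo 0 1) (Ioi 0) := by
  have strictMonoOn := strictMonoOn_criticalLevel ha
  refine ⟨fun x hx => ?_, (strictMonoOn.mono Ioo_subset_Ico_self).injOn, surjOn_criticalLevel a⟩
  simpa only [mem_Ioi, criticalLevel_zero] using
    strictMonoOn (left_mem_Ico.2 one_pos) (Ioo_subset_Ico_self hx) hx.1

lemma strictAntiOn_reciprocalTime : StrictAntiOn reciprocalTime (Ioi (1 / 2)) := by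
  intro S hS T _ hST
  rw [mem_Ioi] at hS
  exact inv_strictAnti₀ (by linarith) (by linarith)

lemma bijOn_reciprocalTime : BijOn reciprocalTime (Ioi 1) (Ioo 0 1) := by
  refine InvOn.bijOn (f' := fun x => (x⁻¹ + 1) / 2) ⟨fun T _ => ?_, fun x _ => ?_⟩
    (fun T hT => ?_) (fun x hx => ?_)
  · simp [reciprocalTime]
  · simp [reciprocalTime, mul_div_cancel₀]
  · rw [mem_Ioi] at hT
    exact ⟨inv_pos.2 (by linarith), inv_lt_one_of_one_lt₀ (by linarith)⟩
  · have one_lt_inv : 1 < x⁻¹ := (one_lt_inv₀ hx.1).2 hx.2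
    rw [mem_Ioi]
    linarith

lemma bijOn_criticalLevel_reciprocalTime {a : ℝ} (ha : 0 ≤ a) :
    BijOn (fun T => criticalLevel a (reciprocalTime T)) (Ioi 1) (Ioi 0) :=
  (bijOn_criticalLevel ha).comp bijOn_reciprocalTime

lemma strictAntiOn_criticalLevel_reciprocalTime {a : ℝ} (ha : 0 ≤ a) :
    StrictAntiOn (fun T => criticalLevel a (reciprocalTime T)) (Ioi 1) :=
  (strictMonoOn_criticalLevel ha).comp_strictAntiOn
    (strictAntiOn_reciprocalTime.mono (Ioi_subset_Ioi (by norm_num)))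
    (bijOn_reciprocalTime.mapsTo.mono_right Ioo_subset_Ico_self)

lemma sub_div_eq_log_iff_criticalLevel_eq (a K T : ℝ) :
    K - a / (2 * T - 1) = -2 * Real.log (1 - 1 / (2 * T - 1) ^ 2) ↔
      criticalLevel a (reciprocalTime T) = K := by
  rw [criticalLevel, reciprocalTime, inv_pow, ← div_eq_mul_inv, inv_eq_one_div]
  constructor <;> intro h <;> linarith

/-- **Existence, uniqueness and monotonicity of the critical future time.**
For `ι ∈ ℝ` and `c > 0`, the equation
`ι² + c² − (c²+2)/(2T₀−1) = −2·log(1 − 1/(2T₀−1)²)` has exactly one solution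
`T₀* ∈ (1,∞)`; moreover `T₀*` is strictly decreasing in `ι²`: if `ι₁² < ι₂²`
(with the same `c`), then the corresponding solutions satisfy `T₀*(ι₂) < T₀*(ι₁)`. -/
theorem critical_future_time_exists_unique_antitone
    (c : ℝ) (hc : 0 < c) :
    (∀ ι : ℝ, ∃! T₀ : ℝ, T₀ ∈ Ioi (1:ℝ) ∧
      ι^2 + c^2 - (c^2 + 2)/(2*T₀ - 1)
        = -2 * Real.log (1 - 1/(2*T₀ - 1)^2)) ∧
    (∀ ι₁ ι₂ T₁ T₂ : ℝ, ι₁^2 < ι₂^2 →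
      T₁ ∈ Ioi (1:ℝ) → T₂ ∈ Ioi (1:ℝ) →
      ι₁^2 + c^2 - (c^2 + 2)/(2*T₁ - 1)
        = -2 * Real.log (1 - 1/(2*T₁ - 1)^2) →
      ι₂^2 + c^2 - (c^2 + 2)/(2*T₂ - 1)
        = -2 * Real.log (1 - 1/(2*T₂ - 1)^2) →
      T₂ < T₁) := by
  have ha : 0 ≤ c ^ 2 + 2 := by positivity
  simp only [sub_div_eq_log_iff_criticalLevel_eq]
  constructor
  · intro ι
    have level_pos : 0 < ι ^ 2 + c ^ 2 := by positivity
    have bijOn := bijOn_criticalLevel_reciprocalTime ha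
    obtain ⟨T, hT, hTlevel⟩ := bijOn.surjOn level_pos
    exact ⟨T, ⟨hT, hTlevel⟩, fun S hS => bijOn.injOn hS.1 hT (hS.2.trans hTlevel.symm)⟩
  · intro ι₁ ι₂ T₁ T₂ hι hT₁ hT₂ hlevel₁ hlevel₂
    refine ((strictAntiOn_criticalLevel_reciprocalTime ha).lt_iff_gt hT₁ hT₂).1 ?_
    simpa only [hlevel₁, hlevel₂, add_lt_add_iff_right] using hι
end
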